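/- Let (ξ_t)_{t∈ℕ₀} be a sequence of real-valued random variables adapted to a filtration (F_t)_{t∈ℕ₀}. Suppose there exist constants γ > 0 and J, M < ∞ such that ξ_0 ≤ J, and for all t: 𝔼[ξ_{t+1} − ξ_t | F_t] ≤ −γ almost surely on the event {ξ_t > J}, and 𝔼[ |ξ_{t+1} − ξ_t|⁴ | ξ_0,…,ξ_t ] ≤ M almost surely. Then there exists a constant c > 0 such that sup_{t∈ℕ₀} 𝔼[(ξ_t⁺)²] ≤ c, where x⁺ := max(0,x). -/

import Mathlib

open MeasureTheory ProbabilityTheory Real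
open scoped ENNReal NNReal RealInnerProductSpace Matrix

noncomputable section

/-- Conditional expectation of `g` given the σ-algebra `m` (notation-free wrapper). -/
def cexp {Ω : Type*} {m0 : MeasurableSpace Ω} (P : Measure Ω) (m : MeasurableSpace Ω)
    (g : Ω → ℝ) : Ω → ℝ := P[g|m]

/-- Conditional probability of the event `s` given the σ-algebra `m`. -/
def cprob {Ω : Type*} {m0 : MeasurableSpace Ω} (P : Measure Ω) (m : MeasurableSpace Ω)
    (s : Set Ω) : Ω → ℝ := cexp P m (s.indicator fun _ => (1 : ℝ))

/-!
If `ξ t > J`, decompose according to the last time `s < t` at which `ξ s ≤ J`. During the excursion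
above `J` that starts at `s`, the tilted process `z = ξ t - J + b + (γ / 2) (t - s)` has drift at
most `-γ / 2`. For `b` large, the negative term `4 z³ · (-γ / 2)` in the expansion of the fourth
power outweighs the terms of order `z²` and lower, so `∫ z⁴` over the excursion does not increase
with `t`; it is bounded at `t = s + 1` because then `z` exceeds the first jump by at most a
constant. As `z ≥ (γ / 2) (t - s)`, the excursion from `s` contributes at most a constant times
`(t - s)⁻²` to the expectation of the square of `(ξ t - J)⁺`, which is summable over `s`.
-/

lemma add_pow_four_le (x y : ℝ) : (x + y) ^ 4 ≤ 8 * x ^ 4 + 8 * y ^ 4 := by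
  have h : (x + y) ^ 4 ≤ 2 ^ (4 - 1) * (x ^ 4 + y ^ 4) := Even.add_pow_le (by decide)
  norm_num at h
  linarith

lemma add_pow_four_le_expansion (z δ : ℝ) :
    (z + δ) ^ 4 ≤ z ^ 4 + 4 * (z ^ 3 * δ) + 8 * (z ^ 2 * δ ^ 2) + 3 * δ ^ 4 := by
  nlinarith [sq_nonneg (z * δ - δ ^ 2)]

lemma posPart_sq_le (x J : ℝ) : max x 0 ^ 2 ≤ 2 * J ^ 2 + 2 * max (x - J) 0 ^ 2 := by
  have hle : max x 0 ≤ |J| + max (x - J) 0 :=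
    max_le (by linarith [le_abs_self J, le_max_left (x - J) 0]) (by positivity)
  calc max x 0 ^ 2 ≤ (|J| + max (x - J) 0) ^ 2 := pow_le_pow_left₀ (le_max_right _ _) hle 2
    _ ≤ 2 * (|J| ^ 2 + max (x - J) 0 ^ 2) := add_sq_le
    _ = 2 * J ^ 2 + 2 * max (x - J) 0 ^ 2 := by rw [sq_abs, mul_add]

lemma sum_range_inv_sub_sq_le_two (t : ℕ) :
    ∑ s ∈ Finset.range t, (((t : ℝ) - s) ^ 2)⁻¹ ≤ 2 := by
  calc ∑ s ∈ Finset.range t, (((t : ℝ) - s) ^ 2)⁻¹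
      = ∑ s ∈ Finset.range (t + 1), (((t - s : ℕ) : ℝ) ^ 2)⁻¹ := by
        rw [Finset.sum_range_succ, Nat.sub_self, Nat.cast_zero, zero_pow two_ne_zero, inv_zero,
          add_zero]
        exact Finset.sum_congr rfl fun s hs => by
          rw [Nat.cast_sub (Finset.mem_range.1 hs).le]
    _ = ∑ k ∈ Finset.range (t + 1), ((k : ℝ) ^ 2)⁻¹ :=
        Finset.sum_flip fun k => ((k : ℝ) ^ 2)⁻¹
    _ = ∑ k ∈ Finset.Ioo 0 (t + 1), ((k : ℝ) ^ 2)⁻¹ := by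
        refine (Finset.sum_subset (fun k hk => ?_) fun k hk hk' => ?_).symm
        · exact Finset.mem_range.2 (Finset.mem_Ioo.1 hk).2
        · have : k = 0 := by
            simp only [Finset.mem_range, Finset.mem_Ioo] at hk hk'
            omega
          simp [this]
    _ ≤ 2 := by simpa using sum_Ioo_inv_sq_le (α := ℝ) 0 (t + 1)

section Integrals

variable {Ω : Type*} {m m0 : MeasurableSpace Ω} {μ : Measure Ω} {f g : Ω → ℝ}

lemma integrable_pow_mul_pow [IsFiniteMeasure μ] {j k n : ℕ} (hf : MemLp f n μ)
    (hg : MemLp g n μ) (hjk : j + k ≤ n) : Integrable (f ^ j * g ^ k) μ := by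
  have hdom : Integrable (fun ω => 1 + ‖f ω‖ ^ n + ‖g ω‖ ^ n) μ :=
    ((integrable_const 1).add hf.integrable_norm_pow').add hg.integrable_norm_pow'
  refine hdom.mono' ((hf.1.pow j).mul (hg.1.pow k)) (ae_of_all _ fun ω => ?_)
  set c := max 1 (max ‖f ω‖ ‖g ω‖)
  calc ‖f ω ^ j * g ω ^ k‖ = ‖f ω‖ ^ j * ‖g ω‖ ^ k := by rw [norm_mul, norm_pow, norm_pow]
    _ ≤ c ^ j * c ^ k := by gcongr <;> simp [c]
    _ = c ^ (j + k) := (pow_add c j k).symm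
    _ ≤ c ^ n := pow_le_pow_right₀ (le_max_left _ _) hjk
    _ ≤ 1 + ‖f ω‖ ^ n + ‖g ω‖ ^ n := by
        have hf0 := pow_nonneg (norm_nonneg (f ω)) n
        have hg0 := pow_nonneg (norm_nonneg (g ω)) n
        rcases max_choice 1 (max ‖f ω‖ ‖g ω‖) with h | h
        · simp only [c, h, one_pow]; linarith
        · rcases max_choice ‖f ω‖ ‖g ω‖ with h' | h' <;> simp only [c, h, h'] <;> linarith

lemma integrable_pow_of_memLp [IsFiniteMeasure μ] {k n : ℕ} (hf : MemLp f n μ) (hk : k ≤ n) :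
    Integrable (f ^ k) μ := by
  simpa using integrable_pow_mul_pow (k := 0) hf hf hk

lemma integral_mul_le_of_condExp_le (hm : m ≤ m0) [SigmaFinite (μ.trim hm)] {c : ℝ}
    (hf : StronglyMeasurable[m] f) (hf0 : 0 ≤ᵐ[μ] f) (hfi : Integrable f μ)
    (hg : Integrable g μ) (hfg : Integrable (f * g) μ) (hc : μ[g | m] ≤ᵐ[μ] fun _ => c) :
    ∫ ω, f ω * g ω ∂μ ≤ c * ∫ ω, f ω ∂μ := by
  calc ∫ ω, f ω * g ω ∂μ = ∫ ω, (μ[f * g | m]) ω ∂μ := (integral_condExp hm).symm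
    _ ≤ ∫ ω, c * f ω ∂μ := by
        refine integral_mono_ae integrable_condExp (hfi.const_mul c) ?_
        filter_upwards [condExp_mul_of_stronglyMeasurable_left hf hfg hg, hf0, hc]
          with ω hpull h0 hcω
        rw [hpull, Pi.mul_apply, mul_comm c]
        exact mul_le_mul_of_nonneg_left hcω h0
    _ = c * ∫ ω, f ω ∂μ := integral_const_mul c f

lemma integral_le_of_condExp_le [IsFiniteMeasure μ] (hm : m ≤ m0) {c : ℝ}
    (hc : μ[f | m] ≤ᵐ[μ] fun _ => c) : ∫ ω, f ω ∂μ ≤ c * μ.real Set.univ := by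
  calc ∫ ω, f ω ∂μ = ∫ ω, (μ[f | m]) ω ∂μ := (integral_condExp hm).symm
    _ ≤ ∫ _, c ∂μ := integral_mono_ae integrable_condExp (integrable_const c) hc
    _ = c * μ.real Set.univ := by rw [integral_const, smul_eq_mul, mul_comm]

lemma condExp_le_of_ae_le_affine [IsFiniteMeasure μ] (hm : m ≤ m0) {M c d : ℝ} (hc : 0 ≤ c)
    (hf : Integrable f μ) (hg : Integrable g μ) (hgf : ∀ᵐ ω ∂μ, g ω ≤ c * f ω + d)
    (hM : μ[f | m] ≤ᵐ[μ] fun _ => M) : μ[g | m] ≤ᵐ[μ] fun _ => c * M + d := by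
  have hmono : μ[g | m] ≤ᵐ[μ] μ[c • f + fun _ => d | m] :=
    condExp_mono hg ((hf.smul c).add (integrable_const d)) hgf
  filter_upwards [hmono, condExp_add (hf.smul c) (integrable_const d) m,
    condExp_smul (μ := μ) c f m, hM] with ω hgω hadd hsmul hMω
  rw [hadd, Pi.add_apply, hsmul, condExp_const hm, Pi.smul_apply, smul_eq_mul] at hgω
  have := mul_le_mul_of_nonneg_left hMω hc
  linarith

lemma condExp_restrict_le_const [IsFiniteMeasure μ] (hm : m ≤ m0) {s : Set Ω}
    (hs : MeasurableSet[m] s) (hf : Integrable f μ) {c : ℝ}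
    (hc : ∀ᵐ ω ∂μ, ω ∈ s → (μ[f | m]) ω ≤ c) :
    (μ.restrict s)[f | m] ≤ᵐ[μ.restrict s] fun _ => c := by
  filter_upwards [condExp_restrict_ae_eq_restrict hm hs hf, (ae_restrict_iff' (hm s hs)).2 hc]
    with ω heq hle
  exact heq.trans_le hle

lemma condExp_le_const_on_of_le [IsFiniteMeasure μ] {m' : MeasurableSpace Ω} (hmm' : m ≤ m')
    (hm' : m' ≤ m0) {s : Set Ω} (hs : MeasurableSet[m] s) (hf : Integrable f μ) {c : ℝ}
    (hc : ∀ᵐ ω ∂μ, ω ∈ s → (μ[f | m']) ω ≤ c) : ∀ᵐ ω ∂μ, ω ∈ s → (μ[f | m]) ω ≤ c := by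
  have hm : m ≤ m0 := hmm'.trans hm'
  rw [← ae_restrict_iff' (hm s hs)]
  have hmono := condExp_mono (m := m) integrable_condExp (integrable_const c)
    (condExp_restrict_le_const hm' (hmm' s hs) hf hc)
  filter_upwards [hmono, condExp_condExp_of_le (μ := μ.restrict s) (f := f) hmm' hm',
    condExp_restrict_ae_eq_restrict hm hs hf] with ω hω htower heq
  rwa [htower, heq, condExp_const hm] at hω

lemma lintegral_posPart_sq_le (f : Ω → ℝ) (J : ℝ) :
    ∫⁻ ω, ENNReal.ofReal (max (f ω) 0 ^ 2) ∂μ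
      ≤ ENNReal.ofReal (2 * J ^ 2) * μ Set.univ
        + 2 * ∫⁻ ω, ENNReal.ofReal (max (f ω - J) 0 ^ 2) ∂μ := by
  rw [← lintegral_const, ← lintegral_const_mul' _ _ ENNReal.ofNat_ne_top,
    ← lintegral_add_left measurable_const]
  refine lintegral_mono fun ω => ?_
  calc ENNReal.ofReal (max (f ω) 0 ^ 2)
      ≤ ENNReal.ofReal (2 * J ^ 2 + 2 * max (f ω - J) 0 ^ 2) :=
        ENNReal.ofReal_le_ofReal (posPart_sq_le (f ω) J)
    _ = ENNReal.ofReal (2 * J ^ 2) + 2 * ENNReal.ofReal (max (f ω - J) 0 ^ 2) := by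
        rw [ENNReal.ofReal_add (by positivity) (by positivity),
          ENNReal.ofReal_mul (q := max (f ω - J) 0 ^ 2) zero_le_two, ENNReal.ofReal_ofNat]

end Integrals

section Step

variable {Ω : Type*} {m m0 : MeasurableSpace Ω} {μ : Measure Ω} [IsFiniteMeasure μ] {z δ : Ω → ℝ}

lemma integral_add_pow_four_le_expansion (hz : MemLp z 4 μ) (hδ : MemLp δ 4 μ) :
    ∫ ω, (z ω + δ ω) ^ 4 ∂μ ≤ ∫ ω, z ω ^ 4 ∂μ + 4 * ∫ ω, z ω ^ 3 * δ ω ∂μ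
      + 8 * ∫ ω, z ω ^ 2 * δ ω ^ 2 ∂μ + 3 * ∫ ω, δ ω ^ 4 ∂μ := by
  have hint4 : Integrable (fun ω => z ω ^ 4) μ := integrable_pow_of_memLp hz le_rfl
  have hint31 : Integrable (fun ω => 4 * (z ω ^ 3 * δ ω)) μ := by
    have h := integrable_pow_mul_pow (j := 3) (k := 1) hz hδ le_rfl
    rw [pow_one] at h
    exact h.const_mul 4
  have hint22 : Integrable (fun ω => 8 * (z ω ^ 2 * δ ω ^ 2)) μ :=
    (integrable_pow_mul_pow (n := 4) hz hδ le_rfl).const_mul 8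
  have hint04 : Integrable (fun ω => 3 * δ ω ^ 4) μ :=
    (integrable_pow_of_memLp hδ le_rfl).const_mul 3
  have hint3 : Integrable (fun ω => z ω ^ 4 + 4 * (z ω ^ 3 * δ ω)) μ := hint4.add hint31
  have hint2 : Integrable
      (fun ω => z ω ^ 4 + 4 * (z ω ^ 3 * δ ω) + 8 * (z ω ^ 2 * δ ω ^ 2)) μ := hint3.add hint22
  rw [← integral_const_mul, ← integral_const_mul, ← integral_const_mul, ← integral_add hint4 hint31,
    ← integral_add hint3 hint22, ← integral_add hint2 hint04]
  exact integral_mono (integrable_pow_of_memLp (hz.add hδ) le_rfl) (hint2.add hint04)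
    fun ω => add_pow_four_le_expansion (z ω) (δ ω)

lemma integral_add_pow_four_le (hm : m ≤ m0) {a b M : ℝ} (ha : 0 ≤ a) (hM : 0 ≤ M)
    (hb : 1 ≤ b) (hbM : 8 + 11 * M ≤ 4 * a * b) (hz : StronglyMeasurable[m] z)
    (hz4 : MemLp z 4 μ) (hδ4 : MemLp δ 4 μ) (hzb : ∀ᵐ ω ∂μ, b ≤ z ω)
    (hdrift : μ[δ | m] ≤ᵐ[μ] fun _ => -a) (hmoment : μ[δ ^ 4 | m] ≤ᵐ[μ] fun _ => M) :
    ∫ ω, (z ω + δ ω) ^ 4 ∂μ ≤ ∫ ω, z ω ^ 4 ∂μ := by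
  have hz2 : Integrable (z ^ 2) μ := integrable_pow_of_memLp (n := 4) hz4 (by norm_num)
  have hz3 : Integrable (z ^ 3) μ := integrable_pow_of_memLp (n := 4) hz4 (by norm_num)
  have hδ2 : Integrable (δ ^ 2) μ := integrable_pow_of_memLp (n := 4) hδ4 (by norm_num)
  have hcubic : ∫ ω, z ω ^ 3 * δ ω ∂μ ≤ -a * ∫ ω, z ω ^ 3 ∂μ := by
    refine integral_mul_le_of_condExp_le (f := z ^ 3) hm (hz.pow 3) ?_ hz3
      (hδ4.integrable (by norm_num)) ?_ hdrift
    · filter_upwards [hzb] with ω hω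
      exact pow_nonneg (by linarith) 3
    · simpa using integrable_pow_mul_pow (j := 3) (k := 1) hz4 hδ4 le_rfl
  have hsq : μ[δ ^ 2 | m] ≤ᵐ[μ] fun _ => 1 * M + 1 :=
    condExp_le_of_ae_le_affine hm zero_le_one (integrable_pow_of_memLp hδ4 le_rfl) hδ2
      (ae_of_all _ fun ω => by
        simp only [Pi.pow_apply]
        nlinarith [sq_nonneg (δ ω ^ 2 - 1)]) hmoment
  have hquadratic : ∫ ω, z ω ^ 2 * δ ω ^ 2 ∂μ ≤ (1 * M + 1) * ∫ ω, z ω ^ 2 ∂μ :=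
    integral_mul_le_of_condExp_le hm (hz.pow 2) (ae_of_all _ fun ω => sq_nonneg (z ω)) hz2 hδ2
      (integrable_pow_mul_pow (n := 4) hz4 hδ4 le_rfl) hsq
  have hquartic : ∫ ω, δ ω ^ 4 ∂μ ≤ M * μ.real Set.univ := integral_le_of_condExp_le hm hmoment
  have hmass : μ.real Set.univ ≤ ∫ ω, z ω ^ 2 ∂μ := by
    calc μ.real Set.univ = ∫ _, (1 : ℝ) ∂μ := by simp
      _ ≤ ∫ ω, z ω ^ 2 ∂μ := by
          refine integral_mono_ae (integrable_const 1) hz2 ?_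
          filter_upwards [hzb] with ω hω
          exact one_le_pow₀ (hb.trans hω)
  have hcube : b * ∫ ω, z ω ^ 2 ∂μ ≤ ∫ ω, z ω ^ 3 ∂μ := by
    rw [← integral_const_mul]
    refine integral_mono_ae (hz2.const_mul b) hz3 ?_
    filter_upwards [hzb] with ω hω
    nlinarith [mul_nonneg (sub_nonneg.2 hω) (sq_nonneg (z ω))]
  have hexpand := integral_add_pow_four_le_expansion hz4 hδ4
  have hsq_nonneg : 0 ≤ ∫ ω, z ω ^ 2 ∂μ := integral_nonneg fun ω => sq_nonneg (z ω)
  nlinarith [mul_le_mul_of_nonneg_left hmass hM, mul_le_mul_of_nonneg_left hcube ha,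
    mul_le_mul_of_nonneg_right hbM hsq_nonneg]

end Step

section Excursion

variable {Ω : Type*}

/-- The event that, among the times `s, …, t`, the process `ξ` is at most `J` at time `s` and above
`J` at all later times: `s` is the last exit time from `(-∞, J]` before `t`. -/
def excursion (ξ : ℕ → Ω → ℝ) (J : ℝ) (s t : ℕ) : Set Ω :=
  {ω | ξ s ω ≤ J ∧ ∀ r, s < r → r ≤ t → J < ξ r ω}

/-- The height of `ξ` over `J` at time `t`, raised by `b` and tilted by the slope `a` since time
`s`. If `ξ` has drift at most `-2a`, the tilted process still has drift at most `-a`, while on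
`excursion ξ J s t` it is at least `b + a (t - s)`. -/
def tilt (ξ : ℕ → Ω → ℝ) (J a b : ℝ) (s t : ℕ) (ω : Ω) : ℝ :=
  ξ t ω - J + b + a * ((t : ℝ) - s)

variable {ξ : ℕ → Ω → ℝ} {J a b : ℝ} {s t : ℕ} {ω : Ω}

lemma excursion_succ_subset : excursion ξ J s (t + 1) ⊆ excursion ξ J s t :=
  fun _ hω => ⟨hω.1, fun r hsr hrt => hω.2 r hsr (hrt.trans t.le_succ)⟩

lemma exists_mem_excursion (h0 : ξ 0 ω ≤ J) (ht : J < ξ t ω) : ∃ s < t, ω ∈ excursion ξ J s t := by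
  classical
  set s := Nat.findGreatest (fun r => ξ r ω ≤ J) t
  have hs : ξ s ω ≤ J := Nat.findGreatest_spec (P := fun r => ξ r ω ≤ J) t.zero_le h0
  refine ⟨s, (Nat.findGreatest_le t).lt_of_ne fun hst => ?_, hs, fun r hsr hrt => ?_⟩
  · exact ht.not_ge (hst ▸ hs)
  · exact not_le.1 (Nat.findGreatest_is_greatest hsr hrt)

lemma measurableSet_excursion_of_measurable {m : MeasurableSpace Ω} (hst : s ≤ t)
    (hξ : ∀ r ≤ t, Measurable[m] (ξ r)) : MeasurableSet[m] (excursion ξ J s t) := by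
  simp only [excursion, Set.ofPred_and, Set.ofPred_forall]
  exact (hξ s hst measurableSet_Iic).inter <| MeasurableSet.iInter fun r =>
    MeasurableSet.iInter fun _ => MeasurableSet.iInter fun hrt => hξ r hrt measurableSet_Ioi

lemma tilt_succ : tilt ξ J a b s (t + 1) ω = tilt ξ J a b s t ω + (ξ (t + 1) ω - ξ t ω + a) := by
  simp only [tilt, Nat.cast_succ]
  ring

lemma add_mul_sub_le_tilt (hst : s < t) (hω : ω ∈ excursion ξ J s t) :
    b + a * ((t : ℝ) - s) ≤ tilt ξ J a b s t ω := by
  have := hω.2 t hst le_rfl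
  simp only [tilt]
  linarith

lemma tilt_succ_self_mem_Icc (hab : 0 ≤ b + a) (hω : ω ∈ excursion ξ J s (s + 1)) :
    tilt ξ J a b s (s + 1) ω ∈ Set.Icc 0 (ξ (s + 1) ω - ξ s ω + (b + a)) := by
  have hstart := hω.1
  have habove := hω.2 (s + 1) s.lt_succ_self le_rfl
  simp only [tilt, Nat.cast_succ, Set.mem_Icc]
  constructor <;> linarith

lemma sq_sub_le_tilt_pow_four (ha : 0 < a) (hb : 0 ≤ b) (hst : s < t)
    (hω : ω ∈ excursion ξ J s t) :
    (ξ t ω - J) ^ 2 ≤ (a ^ 2)⁻¹ * (((t : ℝ) - s) ^ 2)⁻¹ * tilt ξ J a b s t ω ^ 4 := by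
  have hts : 0 < (t : ℝ) - s := sub_pos.2 (Nat.cast_lt.2 hst)
  have hheight : 0 < ξ t ω - J := sub_pos.2 (hω.2 t hst le_rfl)
  have hle : ξ t ω - J ≤ tilt ξ J a b s t ω := by
    have := mul_pos ha hts
    simp only [tilt]
    linarith
  have hlen : a * ((t : ℝ) - s) ≤ tilt ξ J a b s t ω := by
    linarith [add_mul_sub_le_tilt (a := a) (b := b) hst hω]
  rw [← mul_inv, ← mul_pow, inv_mul_eq_div, le_div_iff₀ (by positivity)]
  calc (ξ t ω - J) ^ 2 * (a * ((t : ℝ) - s)) ^ 2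
      ≤ tilt ξ J a b s t ω ^ 2 * tilt ξ J a b s t ω ^ 2 := by gcongr
    _ = tilt ξ J a b s t ω ^ 4 := by ring

lemma lintegral_posPart_sq_le_sum_excursion [m0 : MeasurableSpace Ω] {P : Measure Ω}
    (hξ : ∀ t, Measurable (ξ t)) (h0 : ∀ᵐ ω ∂P, ξ 0 ω ≤ J) (t : ℕ) :
    ∫⁻ ω, ENNReal.ofReal (max (ξ t ω - J) 0 ^ 2) ∂P
      ≤ ∑ s ∈ Finset.range t, ∫⁻ ω in excursion ξ J s t, ENNReal.ofReal ((ξ t ω - J) ^ 2) ∂P := by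
  set g : Ω → ℝ≥0∞ := fun ω => ENNReal.ofReal ((ξ t ω - J) ^ 2)
  have hg : Measurable g := (((hξ t).sub_const J).pow_const 2).ennreal_ofReal
  have hE : ∀ s ∈ Finset.range t, MeasurableSet (excursion ξ J s t) := fun s hs =>
    measurableSet_excursion_of_measurable (Finset.mem_range.1 hs).le fun r _ => hξ r
  calc ∫⁻ ω, ENNReal.ofReal (max (ξ t ω - J) 0 ^ 2) ∂P
      ≤ ∫⁻ ω, ∑ s ∈ Finset.range t, (excursion ξ J s t).indicator g ω ∂P := by
        refine lintegral_mono_ae ?_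
        filter_upwards [h0] with ω hω0
        rcases le_or_gt (ξ t ω) J with hle | hgt
        · simp [max_eq_right (sub_nonpos.2 hle)]
        · obtain ⟨s, hst, hω⟩ := exists_mem_excursion hω0 hgt
          rw [max_eq_left (sub_nonneg.2 hgt.le)]
          calc g ω = (excursion ξ J s t).indicator g ω := (Set.indicator_of_mem hω g).symm
            _ ≤ _ := Finset.single_le_sum (f := fun s => (excursion ξ J s t).indicator g ω)
                (fun _ _ => zero_le) (Finset.mem_range.2 hst)
    _ = ∑ s ∈ Finset.range t, ∫⁻ ω in excursion ξ J s t, g ω ∂P := by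
        rw [lintegral_finsetSum _ fun s hs => hg.indicator (hE s hs)]
        exact Finset.sum_congr rfl fun s hs => lintegral_indicator (hE s hs) g

end Excursion

/-- `ξ` is adapted to `𝒢`, its increments have finite fourth moments, bounded by `M` conditionally
on the past, and above the level `J` its conditional drift is at most `-γ < 0`. -/
structure HasNegativeDrift {Ω : Type*} [m0 : MeasurableSpace Ω] (P : Measure Ω)
    (𝒢 : Filtration ℕ m0) (ξ : ℕ → Ω → ℝ) (γ J M : ℝ) : Prop where
  pos : 0 < γ
  adapted : Adapted 𝒢 ξ
  memLp (t : ℕ) : MemLp (ξ (t + 1) - ξ t) 4 P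
  drift_le (t : ℕ) : ∀ᵐ ω ∂P, J < ξ t ω → (P[ξ (t + 1) - ξ t | 𝒢 t]) ω ≤ -γ
  moment_le (t : ℕ) : P[(ξ (t + 1) - ξ t) ^ 4 | 𝒢 t] ≤ᵐ[P] fun _ => M

namespace HasNegativeDrift

variable {Ω : Type*} [m0 : MeasurableSpace Ω] {P : Measure Ω} {𝒢 : Filtration ℕ m0}
  {ξ : ℕ → Ω → ℝ} {γ J M : ℝ}

lemma measurable_of_le (h : HasNegativeDrift P 𝒢 ξ γ J M) {r t : ℕ} (hrt : r ≤ t) :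
    Measurable[𝒢 t] (ξ r) :=
  (h.adapted r).mono (𝒢.mono hrt) le_rfl

lemma measurable (h : HasNegativeDrift P 𝒢 ξ γ J M) (t : ℕ) : Measurable (ξ t) :=
  (h.adapted t).mono (𝒢.le t) le_rfl

lemma measurable_tilt (h : HasNegativeDrift P 𝒢 ξ γ J M) (a b : ℝ) (s t : ℕ) :
    Measurable[𝒢 t] (tilt ξ J a b s t) :=
  (((h.adapted t).sub_const J).add_const b).add_const _

lemma measurableSet_excursion (h : HasNegativeDrift P 𝒢 ξ γ J M) {s t : ℕ} (hst : s ≤ t) :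
    MeasurableSet[𝒢 t] (excursion ξ J s t) :=
  measurableSet_excursion_of_measurable hst fun _ => h.measurable_of_le

variable [IsFiniteMeasure P]

lemma condExp_increment_add_pow_four_le (h : HasNegativeDrift P 𝒢 ξ γ J M) (a : ℝ) (t : ℕ) :
    P[(fun ω => ξ (t + 1) ω - ξ t ω + a) ^ 4 | 𝒢 t] ≤ᵐ[P] fun _ => 8 * M + 8 * a ^ 4 :=
  condExp_le_of_ae_le_affine (𝒢.le t) (by norm_num) (integrable_pow_of_memLp (h.memLp t) le_rfl)
    (integrable_pow_of_memLp ((h.memLp t).add (memLp_const a)) le_rfl)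
    (ae_of_all _ fun _ => add_pow_four_le _ a) (h.moment_le t)

lemma condExp_increment_add_le (h : HasNegativeDrift P 𝒢 ξ γ J M) {s t : ℕ} (hst : s < t) :
    (P.restrict (excursion ξ J s t))[fun ω => ξ (t + 1) ω - ξ t ω + γ / 2 | 𝒢 t]
      ≤ᵐ[P.restrict (excursion ξ J s t)] fun _ => -(γ / 2) := by
  have hint : Integrable (ξ (t + 1) - ξ t) P := (h.memLp t).integrable (by norm_num)
  have hdrift : (P.restrict (excursion ξ J s t))[ξ (t + 1) - ξ t | 𝒢 t]
      ≤ᵐ[P.restrict (excursion ξ J s t)] fun _ => -γ := by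
    refine condExp_restrict_le_const (𝒢.le t) (h.measurableSet_excursion hst.le) hint ?_
    filter_upwards [h.drift_le t] with ω hω hmem using hω (hmem.2 t hst le_rfl)
  have haffine := condExp_le_of_ae_le_affine (𝒢.le t) (d := γ / 2) zero_le_one hint.restrict
    (hint.add (integrable_const (γ / 2))).restrict (ae_of_all _ fun ω => by simp) hdrift
  filter_upwards [haffine] with ω hω
  exact hω.trans_eq (by ring)

lemma memLp_tilt_succ (h : HasNegativeDrift P 𝒢 ξ γ J M) {a b : ℝ} {s t : ℕ}
    (hmem : MemLp (tilt ξ J a b s t) 4 (P.restrict (excursion ξ J s t))) :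
    MemLp (tilt ξ J a b s (t + 1)) 4 (P.restrict (excursion ξ J s t)) := by
  refine (hmem.add (((h.memLp t).add (memLp_const a)).restrict _)).ae_eq (ae_of_all _ fun ω => ?_)
  exact tilt_succ.symm

lemma setIntegral_tilt_succ_le (h : HasNegativeDrift P 𝒢 ξ γ J M) (hM : 0 ≤ M) {b : ℝ}
    (hb : 1 ≤ b) (hbM : 8 + 11 * (8 * M + 8 * (γ / 2) ^ 4) ≤ 4 * (γ / 2) * b) {s t : ℕ}
    (hst : s < t) (hmem : MemLp (tilt ξ J (γ / 2) b s t) 4 (P.restrict (excursion ξ J s t))) :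
    ∫ ω in excursion ξ J s (t + 1), tilt ξ J (γ / 2) b s (t + 1) ω ^ 4 ∂P
      ≤ ∫ ω in excursion ξ J s t, tilt ξ J (γ / 2) b s t ω ^ 4 ∂P := by
  have hγ := h.pos
  have hE := h.measurableSet_excursion hst.le
  have hincr : MemLp (fun ω => ξ (t + 1) ω - ξ t ω + γ / 2) 4 P :=
    (h.memLp t).add (memLp_const (γ / 2))
  have hmoment := condExp_restrict_le_const (𝒢.le t) hE (integrable_pow_of_memLp hincr le_rfl)
    ((h.condExp_increment_add_pow_four_le (γ / 2) t).mono fun _ hω _ => hω)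
  have htilt : ∀ᵐ ω ∂P.restrict (excursion ξ J s t), b ≤ tilt ξ J (γ / 2) b s t ω := by
    refine (ae_restrict_iff' (𝒢.le t _ hE)).2 (ae_of_all _ fun ω hω => ?_)
    have hlen : 0 ≤ γ / 2 * ((t : ℝ) - s) :=
      mul_nonneg (by positivity) (sub_nonneg.2 (Nat.cast_le.2 hst.le))
    linarith [add_mul_sub_le_tilt (a := γ / 2) (b := b) hst hω]
  calc ∫ ω in excursion ξ J s (t + 1), tilt ξ J (γ / 2) b s (t + 1) ω ^ 4 ∂P
      ≤ ∫ ω in excursion ξ J s t, tilt ξ J (γ / 2) b s (t + 1) ω ^ 4 ∂P :=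
        setIntegral_mono_set (f := tilt ξ J (γ / 2) b s (t + 1) ^ 4)
          (integrable_pow_of_memLp (h.memLp_tilt_succ hmem) le_rfl)
          (ae_of_all _ fun _ => Even.pow_nonneg (by decide) _) excursion_succ_subset.eventuallyLE
    _ ≤ ∫ ω in excursion ξ J s t, tilt ξ J (γ / 2) b s t ω ^ 4 ∂P := by
        simp only [tilt_succ]
        exact integral_add_pow_four_le (𝒢.le t) (by positivity) (by positivity) hb hbM
          (h.measurable_tilt _ b s t).stronglyMeasurable hmem (hincr.restrict _) htilt
          (h.condExp_increment_add_le hst) hmoment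

lemma memLp_tilt_succ_self (h : HasNegativeDrift P 𝒢 ξ γ J M) {a b : ℝ} (hab : 0 ≤ b + a) (s : ℕ) :
    MemLp (tilt ξ J a b s (s + 1)) 4 (P.restrict (excursion ξ J s (s + 1))) := by
  have hjump : MemLp (fun ω => ξ (s + 1) ω - ξ s ω + (b + a)) 4 P :=
    (h.memLp s).add (memLp_const (b + a))
  refine (hjump.restrict _).of_le
    ((h.measurable_tilt a b s (s + 1)).mono (𝒢.le _) le_rfl).aestronglyMeasurable ?_
  refine (ae_restrict_iff' (𝒢.le _ _ (h.measurableSet_excursion s.le_succ))).2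
    (ae_of_all _ fun ω hω => ?_)
  obtain ⟨hnonneg, hle⟩ := tilt_succ_self_mem_Icc hab hω
  exact abs_le_abs_of_nonneg hnonneg hle

lemma setIntegral_tilt_succ_self_le (h : HasNegativeDrift P 𝒢 ξ γ J M) {a b : ℝ}
    (hab : 0 ≤ b + a) (s : ℕ) :
    ∫ ω in excursion ξ J s (s + 1), tilt ξ J a b s (s + 1) ω ^ 4 ∂P
      ≤ (8 * M + 8 * (b + a) ^ 4) * P.real Set.univ := by
  have hjump : MemLp (fun ω => ξ (s + 1) ω - ξ s ω + (b + a)) 4 P :=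
    (h.memLp s).add (memLp_const (b + a))
  calc ∫ ω in excursion ξ J s (s + 1), tilt ξ J a b s (s + 1) ω ^ 4 ∂P
      ≤ ∫ ω in excursion ξ J s (s + 1), (ξ (s + 1) ω - ξ s ω + (b + a)) ^ 4 ∂P := by
        refine setIntegral_mono_on (integrable_pow_of_memLp (h.memLp_tilt_succ_self hab s) le_rfl)
          (integrable_pow_of_memLp (hjump.restrict _) le_rfl)
          (𝒢.le _ _ (h.measurableSet_excursion s.le_succ)) fun ω hω => ?_
        obtain ⟨hnonneg, hle⟩ := tilt_succ_self_mem_Icc hab hω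
        exact pow_le_pow_left₀ hnonneg hle 4
    _ ≤ ∫ ω, (ξ (s + 1) ω - ξ s ω + (b + a)) ^ 4 ∂P :=
        setIntegral_le_integral (integrable_pow_of_memLp hjump le_rfl)
          (ae_of_all _ fun ω => by positivity)
    _ ≤ (8 * M + 8 * (b + a) ^ 4) * P.real Set.univ :=
        integral_le_of_condExp_le (𝒢.le s) (h.condExp_increment_add_pow_four_le (b + a) s)

lemma exists_forall_setIntegral_tilt_le (h : HasNegativeDrift P 𝒢 ξ γ J M) :
    ∃ b K : ℝ, 0 ≤ b ∧ 0 ≤ K ∧ ∀ s t, s < t →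
      MemLp (tilt ξ J (γ / 2) b s t) 4 (P.restrict (excursion ξ J s t)) ∧
        ∫ ω in excursion ξ J s t, tilt ξ J (γ / 2) b s t ω ^ 4 ∂P ≤ K := by
  have hγ := h.pos
  have habs : HasNegativeDrift P 𝒢 ξ γ J |M| :=
    { h with moment_le := fun t => (h.moment_le t).mono fun _ hω => hω.trans (le_abs_self M) }
  set A := 8 + 11 * (8 * |M| + 8 * (γ / 2) ^ 4)
  set b := max 1 (A / (4 * (γ / 2)))
  have hb : 1 ≤ b := le_max_left _ _
  have hbA : A ≤ 4 * (γ / 2) * b := (div_le_iff₀' (by positivity)).1 (le_max_right _ _)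
  refine ⟨b, (8 * |M| + 8 * (b + γ / 2) ^ 4) * P.real Set.univ, by positivity, by positivity,
    fun s t hst => ?_⟩
  induction t, hst using Nat.le_induction with
  | base =>
    have hab : 0 ≤ b + γ / 2 := by positivity
    exact ⟨habs.memLp_tilt_succ_self hab s, habs.setIntegral_tilt_succ_self_le hab s⟩
  | succ t hst ih =>
    obtain ⟨hmem, hle⟩ := ih
    exact ⟨(habs.memLp_tilt_succ hmem).mono_measure
        (Measure.restrict_mono_set P excursion_succ_subset),
      (habs.setIntegral_tilt_succ_le (abs_nonneg M) hb hbA hst hmem).trans hle⟩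

lemma lintegral_excursion_sq_le (h : HasNegativeDrift P 𝒢 ξ γ J M) {b K : ℝ} (hb : 0 ≤ b)
    {s t : ℕ} (hst : s < t)
    (hmem : MemLp (tilt ξ J (γ / 2) b s t) 4 (P.restrict (excursion ξ J s t)))
    (hK : ∫ ω in excursion ξ J s t, tilt ξ J (γ / 2) b s t ω ^ 4 ∂P ≤ K) :
    ∫⁻ ω in excursion ξ J s t, ENNReal.ofReal ((ξ t ω - J) ^ 2) ∂P
      ≤ ENNReal.ofReal (((γ / 2) ^ 2)⁻¹ * K * (((t : ℝ) - s) ^ 2)⁻¹) := by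
  set w := ((γ / 2) ^ 2)⁻¹ * (((t : ℝ) - s) ^ 2)⁻¹
  have hint : Integrable (fun ω => w * tilt ξ J (γ / 2) b s t ω ^ 4)
      (P.restrict (excursion ξ J s t)) := (integrable_pow_of_memLp hmem le_rfl).const_mul w
  calc ∫⁻ ω in excursion ξ J s t, ENNReal.ofReal ((ξ t ω - J) ^ 2) ∂P
      ≤ ∫⁻ ω in excursion ξ J s t, ENNReal.ofReal (w * tilt ξ J (γ / 2) b s t ω ^ 4) ∂P := by
        refine setLIntegral_mono_ae' (𝒢.le t _ (h.measurableSet_excursion hst.le)) ?_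
        exact ae_of_all _ fun ω hω =>
          ENNReal.ofReal_le_ofReal (sq_sub_le_tilt_pow_four (half_pos h.pos) hb hst hω)
    _ = ENNReal.ofReal (∫ ω in excursion ξ J s t, w * tilt ξ J (γ / 2) b s t ω ^ 4 ∂P) :=
        (ofReal_integral_eq_lintegral_ofReal hint (ae_of_all _ fun ω => by positivity)).symm
    _ ≤ ENNReal.ofReal (((γ / 2) ^ 2)⁻¹ * K * (((t : ℝ) - s) ^ 2)⁻¹) := by
        rw [integral_const_mul, mul_right_comm _ K]
        exact ENNReal.ofReal_le_ofReal (mul_le_mul_of_nonneg_left hK (by positivity))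

lemma exists_forall_lintegral_posPart_sub_sq_le (h : HasNegativeDrift P 𝒢 ξ γ J M)
    (h0 : ∀ᵐ ω ∂P, ξ 0 ω ≤ J) :
    ∃ C : ℝ, ∀ t, ∫⁻ ω, ENNReal.ofReal (max (ξ t ω - J) 0 ^ 2) ∂P ≤ ENNReal.ofReal C := by
  obtain ⟨b, K, hb, hK, htilt⟩ := h.exists_forall_setIntegral_tilt_le
  set L := ((γ / 2) ^ 2)⁻¹ * K
  refine ⟨L * 2, fun t => ?_⟩
  calc ∫⁻ ω, ENNReal.ofReal (max (ξ t ω - J) 0 ^ 2) ∂P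
      ≤ ∑ s ∈ Finset.range t, ∫⁻ ω in excursion ξ J s t, ENNReal.ofReal ((ξ t ω - J) ^ 2) ∂P :=
        lintegral_posPart_sq_le_sum_excursion h.measurable h0 t
    _ ≤ ∑ s ∈ Finset.range t, ENNReal.ofReal (L * (((t : ℝ) - s) ^ 2)⁻¹) := by
        refine Finset.sum_le_sum fun s hs => ?_
        obtain ⟨hmem, hle⟩ := htilt s t (Finset.mem_range.1 hs)
        exact h.lintegral_excursion_sq_le hb (Finset.mem_range.1 hs) hmem hle
    _ = ENNReal.ofReal (L * ∑ s ∈ Finset.range t, (((t : ℝ) - s) ^ 2)⁻¹) := by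
        rw [Finset.mul_sum, ENNReal.ofReal_sum_of_nonneg fun s _ => by positivity]
    _ ≤ ENNReal.ofReal (L * 2) := ENNReal.ofReal_le_ofReal <|
        mul_le_mul_of_nonneg_left (sum_range_inv_sub_sq_le_two t) (by positivity)

end HasNegativeDrift

theorem pemantle_rosenthal_general {Ω : Type*} [m0 : MeasurableSpace Ω] (P : Measure Ω)
    [IsFiniteMeasure P] (ξ : ℕ → Ω → ℝ) (F 𝒢 : Filtration ℕ m0) (h𝒢F : 𝒢 ≤ F)
    (hadp : Adapted 𝒢 ξ)
    (hint4 : ∀ t, Integrable (fun ω => |ξ (t + 1) ω - ξ t ω| ^ 4) P)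
    (γ J M : ℝ) (hγ : 0 < γ)
    (h0 : ∀ᵐ ω ∂P, ξ 0 ω ≤ J)
    (hdrift : ∀ t : ℕ, ∀ᵐ ω ∂P, J < ξ t ω →
      cexp P (F t) (fun ω' => ξ (t + 1) ω' - ξ t ω') ω ≤ -γ)
    (hmom : ∀ t : ℕ, ∀ᵐ ω ∂P,
      cexp P (𝒢 t) (fun ω' => |ξ (t + 1) ω' - ξ t ω'| ^ 4) ω ≤ M) :
    ∃ c : ℝ, 0 < c ∧ ∀ t : ℕ,
      ∫⁻ ω, ENNReal.ofReal (max (ξ t ω) 0 ^ 2) ∂P ≤ ENNReal.ofReal c := by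
  have hmeas (t : ℕ) : Measurable (ξ t) := (hadp t).mono (𝒢.le t) le_rfl
  have hmemLp (t : ℕ) : MemLp (ξ (t + 1) - ξ t) 4 P :=
    (integrable_norm_rpow_iff ((hmeas (t + 1)).sub (hmeas t)).aestronglyMeasurable (by norm_num)
      (by norm_num)).1 (by simpa using hint4 t)
  have h : HasNegativeDrift P 𝒢 ξ γ J M :=
    { pos := hγ
      adapted := hadp
      memLp := hmemLp
      drift_le := fun t => condExp_le_const_on_of_le (s := {ω | J < ξ t ω}) (h𝒢F t) (F.le t)
        (hadp t measurableSet_Ioi) ((hmemLp t).integrable (by norm_num)) (hdrift t)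
      moment_le := fun t => by
        have hmoment := hmom t
        simp only [cexp, Even.pow_abs (show Even 4 by decide)] at hmoment
        exact hmoment }
  obtain ⟨C, hC⟩ := h.exists_forall_lintegral_posPart_sub_sq_le h0
  set B := ENNReal.ofReal (2 * J ^ 2) * P Set.univ + 2 * ENNReal.ofReal C
  have hB : B ≠ ∞ := by finiteness
  refine ⟨B.toReal + 1, by positivity, fun t => ?_⟩
  calc ∫⁻ ω, ENNReal.ofReal (max (ξ t ω) 0 ^ 2) ∂P
      ≤ ENNReal.ofReal (2 * J ^ 2) * P Set.univ
        + 2 * ∫⁻ ω, ENNReal.ofReal (max (ξ t ω - J) 0 ^ 2) ∂P := lintegral_posPart_sq_le (ξ t) J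
    _ ≤ B := by
        simp only [B]
        gcongr
        exact hC t
    _ ≤ ENNReal.ofReal (B.toReal + 1) :=
        ENNReal.le_ofReal_iff_toReal_le hB (by positivity) |>.2 (by linarith)

/-- **Proposition (Pemantle–Rosenthal): moment conditions for a uniformly bounded
second moment of the positive part under a negative drift.** -/
theorem pemantle_rosenthal {Ω : Type*} [m0 : MeasurableSpace Ω] (P : Measure Ω)
    [IsProbabilityMeasure P] (ξ : ℕ → Ω → ℝ) (F : Filtration ℕ m0)
    (hadp : Adapted F ξ)
    (hint : ∀ t, Integrable (ξ t) P)
    (hint4 : ∀ t, Integrable (fun ω => |ξ (t + 1) ω - ξ t ω| ^ 4) P)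
    (γ J M : ℝ) (hγ : 0 < γ)
    (h0 : ∀ᵐ ω ∂P, ξ 0 ω ≤ J)
    (hdrift : ∀ t : ℕ, ∀ᵐ ω ∂P, J < ξ t ω →
      cexp P (F t) (fun ω' => ξ (t + 1) ω' - ξ t ω') ω ≤ -γ)
    (hmom : ∀ t : ℕ, ∀ᵐ ω ∂P,
      cexp P (⨆ s ∈ Set.Iic t, MeasurableSpace.comap (ξ s) inferInstance)
        (fun ω' => |ξ (t + 1) ω' - ξ t ω'| ^ 4) ω ≤ M) :
    ∃ c : ℝ, 0 < c ∧ ∀ t : ℕ,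
      ∫⁻ ω, ENNReal.ofReal (max (ξ t ω) 0 ^ 2) ∂P ≤ ENNReal.ofReal c := by
  exact pemantle_rosenthal_general P ξ F
    (Filtration.natural ξ fun t => ((hadp t).mono (F.le t) le_rfl).stronglyMeasurable)
    (fun _ => iSup₂_le fun s hs => (hadp s).comap_le.trans (F.mono hs))
    (Filtration.stronglyAdapted_natural _).adapted hint4 γ J M hγ h0 hdrift hmom

end
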